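/- There exists a constant C > 0 such that for every smooth compactly supported function u : ℝ³ → ℝ³ one has (sup_{x ∈ ℝ³} ‖u(x)‖)² ≤ C · (‖u‖_{L²} + ‖Du‖_{L²} + ‖D²u‖_{L²}) · ‖Du‖_{L²}. -/

import Mathlib

/-!
The bound holds in the scale-invariant form `|𝕊²| ‖u x‖² ≤ 8 ‖Du‖ ‖D²u‖` (`L²` norms on the right),
which is stronger than the claim.

Fix `x` and a unit vector `ω`. Since `u` has compact support, the fundamental theorem of calculus
for `‖u‖²` along the ray `r ↦ x + r ω` gives `‖u x‖² ≤ 2 ∫₀^∞ ‖u‖ ‖Du‖ dr` (`enorm_sq_le_ray`).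
Integrating over the sphere of directions and applying Cauchy-Schwarz on `𝕊² × (0, ∞)` with the
measure `dω dr` (no factor `r²`) leaves the integrals of `‖u‖²` and `‖Du‖²` over
`𝕊² × (0, ∞)`. The one-dimensional Hardy inequality `∫₀^∞ ‖f‖² dr ≤ 4 ∫₀^∞ r² ‖f'‖² dr`
(`hardy_ray`) on each ray supplies exactly the Jacobian `r²` of polar coordinates in `ℝ³`, so these
integrals are at most `4 ‖Du‖²` and `4 ‖D²u‖²` (`hardy_sphere`).
-/

open MeasureTheory

open Set ENNReal in
/-- Hardy's inequality on a half-line, for values in any Banach space. The norm of `f` need not be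
differentiable, so `f` is dominated by the scalar function `G r = ∫_r^R ‖f'‖`, for which
`(r G²)' = G² - 2 r G ‖f'‖` has zero integral over `[0, R]`. -/
theorem hardy_ray {F : Type*} [NormedAddCommGroup F] [NormedSpace ℝ F] [CompleteSpace F]
    {f f' : ℝ → F} (hf : ∀ r, HasDerivAt f (f' r) r) (hf' : Continuous f')
    {R : ℝ} (hR : 0 ≤ R) (hsupp : ∀ r, R ≤ r → f r = 0) :
    ∫⁻ r in Ioi (0 : ℝ), ‖f r‖ₑ ^ 2 ≤
      4 * ∫⁻ r in Ioi (0 : ℝ), ENNReal.ofReal (r ^ 2) * ‖f' r‖ₑ ^ 2 := by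
  have hfc : Continuous f := continuous_iff_continuousAt.2 fun r ↦ (hf r).continuousAt
  have hk : Continuous fun r ↦ ‖f' r‖ := hf'.norm
  set G : ℝ → ℝ := fun r ↦ - ∫ s in R..r, ‖f' s‖ with hG
  have hGd : ∀ r, HasDerivAt G (-‖f' r‖) r := fun r ↦
    (intervalIntegral.integral_hasDerivAt_right (hk.intervalIntegrable _ _)
      (hk.stronglyMeasurableAtFilter _ _) hk.continuousAt).neg
  have hGc : Continuous G := continuous_iff_continuousAt.2 fun r ↦ (hGd r).continuousAt
  have hfG : ∀ r, r ≤ R → ‖f r‖ ≤ G r := by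
    intro r hr
    have h1 : ∫ s in r..R, f' s = f R - f r :=
      intervalIntegral.integral_eq_sub_of_hasDerivAt (fun s _ ↦ hf s)
        (hf'.intervalIntegrable _ _)
    have h2 := intervalIntegral.norm_integral_le_integral_norm (f := f') (μ := volume) hr
    rw [h1, hsupp R le_rfl, zero_sub, norm_neg] at h2
    simpa [hG, ← intervalIntegral.integral_symm] using h2
  have hFTC : ∫ r in (0 : ℝ)..R, (G r ^ 2 - 2 * r * G r * ‖f' r‖) = 0 := by
    have := intervalIntegral.integral_eq_sub_of_hasDerivAt (a := 0) (b := R)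
      (f := fun r ↦ r * G r ^ 2) (f' := fun r ↦ G r ^ 2 - 2 * r * G r * ‖f' r‖)
      (fun r _ ↦ by
        refine ((hasDerivAt_id r).mul ((hGd r).pow 2)).congr_deriv ?_
        simp; ring)
      ((by fun_prop : Continuous _).intervalIntegrable _ _)
    rw [this]; simp [hG]
  have hle : ∫ r in (0 : ℝ)..R, ‖f r‖ ^ 2 ≤ ∫ r in (0 : ℝ)..R, 4 * (r ^ 2 * ‖f' r‖ ^ 2) := by
    have : ∫ r in (0 : ℝ)..R, ‖f r‖ ^ 2 ≤ ∫ r in (0 : ℝ)..R,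
        (4 * (r ^ 2 * ‖f' r‖ ^ 2) + 2 * (G r ^ 2 - 2 * r * G r * ‖f' r‖)) := by
      refine intervalIntegral.integral_mono_on hR
        ((by fun_prop : Continuous _).intervalIntegrable _ _)
        ((by fun_prop : Continuous _).intervalIntegrable _ _) fun r hr ↦ ?_
      -- With `k = r ‖f' r‖` the right side is `4 k² + 2 G² - 4 G k = G² + (G - 2 k)²`.
      have := hfG r hr.2
      nlinarith [norm_nonneg (f r), sq_nonneg (G r - 2 * (r * ‖f' r‖))]
    rw [intervalIntegral.integral_add ((by fun_prop : Continuous _).intervalIntegrable _ _)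
        ((by fun_prop : Continuous _).intervalIntegrable _ _),
      intervalIntegral.integral_const_mul 2, hFTC, mul_zero, add_zero] at this
    exact this
  have e1 : ∫⁻ r in Ioi (0 : ℝ), ‖f r‖ₑ ^ 2 = ∫⁻ r in Ioc 0 R, ‖f r‖ₑ ^ 2 := by
    rw [← Ioc_union_Ioi_eq_Ioi hR, lintegral_union measurableSet_Ioi
        (Set.Ioc_disjoint_Ioi le_rfl),
      setLIntegral_congr_fun (g := fun _ ↦ 0) measurableSet_Ioi
        fun r (hr : R < r) ↦ by simp [hsupp r hr.le]]
    simp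
  have e2 : ∀ g : ℝ → ℝ, Continuous g → (∀ r, 0 ≤ g r) →
      ENNReal.ofReal (∫ r in (0 : ℝ)..R, g r) = ∫⁻ r in Ioc 0 R, ENNReal.ofReal (g r) := by
    intro g hg h0
    rw [intervalIntegral.integral_of_le hR,
      ofReal_integral_eq_lintegral_ofReal (hg.intervalIntegrable _ _).1 (ae_of_all _ h0)]
  calc ∫⁻ r in Ioi (0 : ℝ), ‖f r‖ₑ ^ 2
      = ENNReal.ofReal (∫ r in (0 : ℝ)..R, ‖f r‖ ^ 2) := by
        rw [e1, e2 _ (by fun_prop) fun r ↦ by positivity]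
        simp_rw [ENNReal.ofReal_pow (norm_nonneg _), ofReal_norm]
    _ ≤ _ := ENNReal.ofReal_le_ofReal hle
    _ = 4 * ∫⁻ r in Ioc 0 R, ENNReal.ofReal (r ^ 2) * ‖f' r‖ₑ ^ 2 := by
        rw [e2 _ (by fun_prop) fun r ↦ by positivity, ← lintegral_const_mul' _ _ (by simp)]
        refine lintegral_congr fun r ↦ ?_
        rw [ENNReal.ofReal_mul (by simp), ENNReal.ofReal_mul (by positivity),
          ENNReal.ofReal_pow (norm_nonneg _), ofReal_norm]
        simp
    _ ≤ _ := by gcongr; exact Ioc_subset_Ioi_self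

open Set ENNReal in
theorem enorm_sq_le_ray {F : Type*} [NormedAddCommGroup F] [InnerProductSpace ℝ F]
    {f f' : ℝ → F} (hf : ∀ r, HasDerivAt f (f' r) r) (hf' : Continuous f')
    {R : ℝ} (hR : 0 ≤ R) (hsupp : f R = 0) :
    ‖f 0‖ₑ ^ 2 ≤ 2 * ∫⁻ r in Ioi (0 : ℝ), ‖f r‖ₑ * ‖f' r‖ₑ := by
  have hfc : Continuous f := continuous_iff_continuousAt.2 fun r ↦ (hf r).continuousAt
  have h1 : ∫ r in (0 : ℝ)..R, 2 * inner ℝ (f r) (f' r) = ‖f R‖ ^ 2 - ‖f 0‖ ^ 2 :=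
    intervalIntegral.integral_eq_sub_of_hasDerivAt (f := fun r ↦ ‖f r‖ ^ 2)
      (fun s _ ↦ (hf s).norm_sq)
      ((by fun_prop : Continuous _).intervalIntegrable _ _)
  have h2 : ‖f 0‖ ^ 2 ≤ ∫ r in (0 : ℝ)..R, 2 * (‖f r‖ * ‖f' r‖) := by
    have h3 := intervalIntegral.norm_integral_le_integral_norm
      (f := fun r ↦ 2 * inner ℝ (f r) (f' r)) (μ := volume) hR
    rw [h1, hsupp] at h3
    simp only [norm_zero, ne_eq, OfNat.ofNat_ne_zero, not_false_eq_true, zero_pow, zero_sub,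
      norm_neg, norm_pow, norm_norm] at h3
    refine h3.trans (intervalIntegral.integral_mono_on hR
        ((by fun_prop : Continuous _).intervalIntegrable _ _)
        ((by fun_prop : Continuous _).intervalIntegrable _ _) fun r hr ↦ ?_)
    rw [norm_mul, Real.norm_ofNat]
    gcongr
    exact norm_inner_le_norm _ _
  calc ‖f 0‖ₑ ^ 2 = ENNReal.ofReal (‖f 0‖ ^ 2) := by
        rw [ENNReal.ofReal_pow (norm_nonneg _), ofReal_norm]
    _ ≤ _ := ENNReal.ofReal_le_ofReal h2
    _ = 2 * ∫⁻ r in Ioc 0 R, ‖f r‖ₑ * ‖f' r‖ₑ := by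
        rw [intervalIntegral.integral_of_le hR,
          ofReal_integral_eq_lintegral_ofReal
            ((by fun_prop : Continuous _).intervalIntegrable _ _).1
            (ae_of_all _ fun r ↦ by positivity), ← lintegral_const_mul' _ _ (by simp)]
        refine lintegral_congr fun r ↦ ?_
        rw [ENNReal.ofReal_mul (by simp), ENNReal.ofReal_mul (by positivity),
          ofReal_norm, ofReal_norm]
        simp
    _ ≤ _ := by gcongr; exact Ioc_subset_Ioi_self

open Set ENNReal in
/-- Integration in polar coordinates, for `ℝ≥0∞`-valued functions. -/
theorem lintegral_polar {E : Type*} [NormedAddCommGroup E] [NormedSpace ℝ E]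
    [MeasurableSpace E] [BorelSpace E] [FiniteDimensional ℝ E] [Nontrivial E]
    (μ : Measure E) [μ.IsAddHaarMeasure] {g : E → ℝ≥0∞} (hg : Measurable g) :
    ∫⁻ ω, (∫⁻ r in Ioi (0 : ℝ), ENNReal.ofReal (r ^ (Module.finrank ℝ E - 1)) * g (r • ω.1))
      ∂μ.toSphere = ∫⁻ x, g x ∂μ := by
  symm
  have hmeas : Measurable fun p : Metric.sphere (0 : E) 1 × Ioi (0 : ℝ) ↦ g (p.2.1 • p.1.1) :=
    hg.comp (by fun_prop)
  calc ∫⁻ x, g x ∂μ = ∫⁻ x : ({(0)}ᶜ : Set E), g x ∂(μ.comap (↑)) := by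
        rw [lintegral_subtype_comap (measurableSet_singleton _).compl g, restrict_compl_singleton]
    _ = ∫⁻ p, g (p.2.1 • p.1.1) ∂μ.toSphere.prod (.volumeIoiPow (Module.finrank ℝ E - 1)) := by
        rw [← μ.measurePreserving_homeomorphUnitSphereProd.lintegral_comp hmeas]
        refine lintegral_congr fun x ↦ ?_
        congr 1
        exact (congrArg Subtype.val ((homeomorphUnitSphereProd E).symm_apply_apply x)).symm
    _ = _ := by
        rw [lintegral_prod _ hmeas.aemeasurable]
        refine lintegral_congr fun ω ↦ ?_
        have hm : Measurable fun r : Ioi (0 : ℝ) ↦ g (r.1 • ω.1) := hg.comp (by fun_prop)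
        rw [Measure.volumeIoiPow, lintegral_withDensity_eq_lintegral_mul _ (by fun_prop) hm]
        exact lintegral_subtype_comap measurableSet_Ioi
          fun r ↦ ENNReal.ofReal (r ^ (Module.finrank ℝ E - 1)) * g (r • ω.1)

local notation "E3" => EuclideanSpace ℝ (Fin 3)

theorem hasDerivAt_ray {F : Type*} [NormedAddCommGroup F] [NormedSpace ℝ F] {v : E3 → F}
    (hv : ContDiff ℝ 1 v) (x ω : E3) (r : ℝ) :
    HasDerivAt (fun r : ℝ ↦ v (x + r • ω)) (fderiv ℝ v (x + r • ω) ω) r := by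
  have h1 : HasDerivAt (fun r : ℝ ↦ x + r • ω) ω r := by
    simpa using ((hasDerivAt_id r).smul_const ω).const_add x
  exact ((hv.differentiable one_ne_zero _).hasFDerivAt).comp_hasDerivAt r h1

theorem exists_ray_eq_zero {F : Type*} [NormedAddCommGroup F] {v : E3 → F}
    (hv : HasCompactSupport v) (x : E3) :
    ∃ R : ℝ, 0 ≤ R ∧ ∀ ω : E3, ‖ω‖ = 1 → ∀ r, R ≤ r → v (x + r • ω) = 0 := by
  obtain ⟨M, hM⟩ := hv.isCompact.isBounded.exists_norm_le
  refine ⟨|M| + ‖x‖ + 1, by positivity, fun ω hω r hr ↦ ?_⟩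
  by_contra h
  have h1 := hM _ (subset_tsupport _ h)
  have h2 : ‖r • ω‖ ≤ ‖x + r • ω‖ + ‖x‖ := by
    simpa using norm_sub_le (x + r • ω) x
  rw [norm_smul, hω, mul_one, Real.norm_eq_abs] at h2
  linarith [le_abs_self r, le_abs_self M]

/-- Hardy's inequality around `x`: the left side is `∫ ‖v y‖² / ‖y - x‖² dy` in polar coordinates. -/
theorem hardy_sphere {F : Type*} [NormedAddCommGroup F] [NormedSpace ℝ F] [CompleteSpace F]
    {v : E3 → F} (hv : ContDiff ℝ 1 v) (hsupp : HasCompactSupport v) (x : E3) :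
    ∫⁻ ω, (∫⁻ r in Set.Ioi (0 : ℝ), ‖v (x + r • ω.1)‖ₑ ^ 2) ∂(volume : Measure E3).toSphere ≤
      4 * eLpNorm (fderiv ℝ v) 2 volume ^ 2 := by
  obtain ⟨R, hR, hzero⟩ := exists_ray_eq_zero hsupp x
  have hdc : Continuous (fderiv ℝ v) := hv.continuous_fderiv one_ne_zero
  have hL2 : eLpNorm (fderiv ℝ v) 2 volume ^ 2 = ∫⁻ y, ‖fderiv ℝ v (x + y)‖ₑ ^ 2 := by
    rw [lintegral_add_left_eq_self (fun y ↦ ‖fderiv ℝ v y‖ₑ ^ 2) x]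
    simpa using eLpNorm_nnreal_pow_eq_lintegral (f := fderiv ℝ v) (μ := volume) (p := 2)
      two_ne_zero
  rw [hL2, ← lintegral_polar volume (g := fun y ↦ ‖fderiv ℝ v (x + y)‖ₑ ^ 2)
    (by fun_prop), ← lintegral_const_mul' _ _ (by simp)]
  refine lintegral_mono fun ω ↦ ?_
  have hω : ‖ω.1‖ = 1 := by simp
  refine (hardy_ray (fun r ↦ hasDerivAt_ray hv x ω.1 r) (by fun_prop) hR
    (hzero ω.1 hω)).trans ?_
  have hdim : Module.finrank ℝ E3 - 1 = 2 := by simp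
  rw [hdim]
  gcongr with r
  simpa [enorm_eq_nnnorm, ← NNReal.coe_le_coe, hω] using
    (fderiv ℝ v (x + r • ω.1)).le_opNorm ω.1

/-- The scale-invariant Agmon inequality `|𝕊²| ‖u x‖² ≤ 8 ‖Du‖ ‖D²u‖`. -/
theorem sphere_mul_enorm_sq_le {u : E3 → E3} (hu : ContDiff ℝ 2 u) (hsupp : HasCompactSupport u)
    (x : E3) :
    (volume : Measure E3).toSphere Set.univ * ‖u x‖ₑ ^ 2 ≤
      8 * (eLpNorm (fderiv ℝ u) 2 volume * eLpNorm (fderiv ℝ (fderiv ℝ u)) 2 volume) := by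
  set σ := (volume : Measure E3).toSphere
  set ν := σ.prod (volume.restrict (Set.Ioi (0 : ℝ)))
  have hu1 : ContDiff ℝ 1 u := hu.of_le (by norm_num)
  have hdu : ContDiff ℝ 1 (fderiv ℝ u) := hu.fderiv_right (by norm_num)
  have huc := hu.continuous
  have hduc := hdu.continuous
  obtain ⟨R, hR, hzero⟩ := exists_ray_eq_zero hsupp x
  set a : Metric.sphere (0 : E3) 1 × ℝ → ENNReal := fun p ↦ ‖u (x + p.2 • p.1.1)‖ₑ
  set b : Metric.sphere (0 : E3) 1 × ℝ → ENNReal := fun p ↦ ‖fderiv ℝ u (x + p.2 • p.1.1)‖ₑ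
  have ha : Measurable a := (by fun_prop : Continuous a).measurable
  have hb : Measurable b := (by fun_prop : Continuous b).measurable
  have hA : ∫⁻ p, a p ^ (2 : ℝ) ∂ν ≤ 4 * eLpNorm (fderiv ℝ u) 2 volume ^ 2 := by
    rw [lintegral_prod _ (by fun_prop)]
    simpa [a] using hardy_sphere hu1 hsupp x
  have hB : ∫⁻ p, b p ^ (2 : ℝ) ∂ν ≤ 4 * eLpNorm (fderiv ℝ (fderiv ℝ u)) 2 volume ^ 2 := by
    rw [lintegral_prod _ (by fun_prop)]
    simpa [b] using hardy_sphere hdu (hsupp.fderiv ℝ) x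
  have hroot : ∀ t : ENNReal, (4 * t ^ 2) ^ (1 / (2 : ℝ)) = 2 * t := by
    intro t
    rw [show 4 * t ^ 2 = (2 * t) ^ (2 : ℝ) by rw [ENNReal.rpow_two]; ring, ← ENNReal.rpow_mul]
    simp
  calc σ Set.univ * ‖u x‖ₑ ^ 2 = ∫⁻ _, ‖u x‖ₑ ^ 2 ∂σ := by rw [lintegral_const, mul_comm]
    _ ≤ ∫⁻ ω, 2 * (∫⁻ r in Set.Ioi (0 : ℝ), a (ω, r) * b (ω, r)) ∂σ := by
        refine lintegral_mono fun ω ↦ ?_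
        have hω : ‖ω.1‖ = 1 := by simp
        have h := enorm_sq_le_ray (fun r ↦ hasDerivAt_ray hu1 x ω.1 r) (by fun_prop) hR
          (hzero ω.1 hω R le_rfl)
        simp only [zero_smul, add_zero] at h
        refine h.trans ?_
        gcongr with r
        simpa [b, enorm_eq_nnnorm, ← NNReal.coe_le_coe, hω] using
          (fderiv ℝ u (x + r • ω.1)).le_opNorm ω.1
    _ = 2 * ∫⁻ p, (a * b) p ∂ν := by
        rw [lintegral_const_mul' _ _ (by simp), lintegral_prod _ (by fun_prop)]
        rfl
    _ ≤ 2 * ((4 * eLpNorm (fderiv ℝ u) 2 volume ^ 2) ^ (1 / (2 : ℝ)) *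
          (4 * eLpNorm (fderiv ℝ (fderiv ℝ u)) 2 volume ^ 2) ^ (1 / (2 : ℝ))) := by
        grw [ENNReal.lintegral_mul_le_Lp_mul_Lq ν Real.HolderConjugate.two_two ha.aemeasurable
          hb.aemeasurable, hA, hB]
    _ = _ := by rw [hroot, hroot]; ring

/-- (Agmon-type inequality.) There is a constant `C > 0` such that for
every smooth compactly supported `u : ℝ³ → ℝ³`,
`(sup_x ‖u(x)‖)² ≤ C (‖u‖_{L²} + ‖Du‖_{L²} + ‖D²u‖_{L²}) ‖Du‖_{L²}`. -/
theorem stmt4 :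
    ∃ C : ℝ, 0 < C ∧
      ∀ u : EuclideanSpace ℝ (Fin 3) → EuclideanSpace ℝ (Fin 3),
        ContDiff ℝ (⊤ : ℕ∞) u → HasCompactSupport u →
          (⨆ x, ‖u x‖) ^ 2
            ≤ C * ((eLpNorm u 2 volume).toReal
                  + (eLpNorm (fderiv ℝ u) 2 volume).toReal
                  + (eLpNorm (fderiv ℝ (fderiv ℝ u)) 2 volume).toReal)
                * (eLpNorm (fderiv ℝ u) 2 volume).toReal := by
  set σ := (volume : Measure E3).toSphere
  have hσ : 0 < (σ Set.univ).toReal :=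
    ENNReal.toReal_pos (Measure.measure_univ_ne_zero.2 (Measure.toSphere_ne_zero _))
      (measure_ne_top _ _)
  refine ⟨8 / (σ Set.univ).toReal, by positivity, fun u hu hsupp ↦ ?_⟩
  have hu2 : ContDiff ℝ 2 u := hu.of_le (WithTop.coe_le_coe.2 (le_top : (2 : ℕ∞) ≤ ⊤))
  have hdu : ContDiff ℝ 1 (fderiv ℝ u) := hu2.fderiv_right (by norm_num)
  have hds := hsupp.fderiv ℝ
  have h1 : eLpNorm (fderiv ℝ u) 2 volume ≠ ⊤ :=
    (hdu.continuous.memLp_of_hasCompactSupport hds).eLpNorm_ne_top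
  have h2 : eLpNorm (fderiv ℝ (fderiv ℝ u)) 2 volume ≠ ⊤ :=
    ((hdu.continuous_fderiv one_ne_zero).memLp_of_hasCompactSupport
      (hds.fderiv ℝ)).eLpNorm_ne_top
  set A := (eLpNorm (fderiv ℝ u) 2 volume).toReal
  set B := (eLpNorm (fderiv ℝ (fderiv ℝ u)) 2 volume).toReal
  have key : ∀ x, ‖u x‖ ^ 2 ≤ 8 / (σ Set.univ).toReal * (A * B) := by
    intro x
    have h := ENNReal.toReal_mono
      (ENNReal.mul_ne_top (by simp) (ENNReal.mul_ne_top h1 h2)) (sphere_mul_enorm_sq_le hu2 hsupp x)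
    simp only [ENNReal.toReal_mul, ENNReal.toReal_pow, toReal_enorm, ENNReal.toReal_ofNat] at h
    rw [div_mul_eq_mul_div, le_div_iff₀ hσ, mul_comm]
    exact h
  have hA : 0 ≤ A := ENNReal.toReal_nonneg
  have hB : 0 ≤ B := ENNReal.toReal_nonneg
  have hsup : (⨆ x, ‖u x‖) ^ 2 ≤ 8 / (σ Set.univ).toReal * (A * B) := by
    have h0 : 0 ≤ ⨆ x, ‖u x‖ := Real.iSup_nonneg fun x ↦ norm_nonneg _
    rw [← Real.le_sqrt h0 (by positivity)]
    exact ciSup_le fun x ↦ Real.le_sqrt_of_sq_le (key x)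
  refine hsup.trans ?_
  rw [mul_assoc, mul_comm A B]
  gcongr
  have : 0 ≤ (eLpNorm u 2 volume).toReal := ENNReal.toReal_nonneg
  linarith
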